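/- arXiv:1304.4042 — 2 statements merged into one kernel-verified Lean document; each statement's English description precedes it below -/
import Mathlib

section
/- Let L_1, …, L_g be finite extensions of ℚ_p with rings of integers O_1, …, O_g, maximal ideals 𝔪_1, …, 𝔪_g, and absolute ramification indices e_1, …, e_g. Let G be a profinite abelian group and φ : ∏_{i=1}^g O_i^× → G a continuous group homomorphism whose image is open in G. Let r_1, …, r_g ≥ 0 be real numbers, and let μ be a locally constant distribution on G for which there exists C ∈ ℝ such that v_p(μ(1_{x·φ(∏_i V_i(n_i))})) ≥ C − (r_1 n_1 + ⋯ + r_g n_g) for all x ∈ G and all integers n_1, …, n_g ≥ 0, where V_i(0) = O_i^× and V_i(n) = 1 + 𝔪_i^n for n ≥ 1. Then for any choice of integers c_i > e_i/(p−1) (1 ≤ i ≤ g), setting H = φ(∏_i (1 + 𝔪_i^{c_i})), there exists C' ∈ ℝ such that v_p(μ(1_{x·H^{p^m}})) ≥ C' − (e_1 r_1 + ⋯ + e_g r_g)·m for all x ∈ G and all integers m ≥ 0, where H^{p^m} = { h^{p^m} : h ∈ H }. -/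
open Filter Topology

/-- The ring of integers `O_L = {x : L | ‖x‖ ≤ 1}` of a non-archimedean normed field. -/
def unitBall (L : Type*) [NormedField L] [IsUltrametricDist L] : Subring L where
  carrier := {x : L | ‖x‖ ≤ 1}
  mul_mem' := fun {a b} ha hb => by
    simp only [Set.mem_setOf_eq] at *
    calc ‖a * b‖ = ‖a‖ * ‖b‖ := norm_mul a b
    _ ≤ 1 * 1 := mul_le_mul ha hb (norm_nonneg b) zero_le_one
    _ = 1 := one_mul 1
  one_mem' := by simp
  add_mem' := fun {a b} ha hb =>
    le_trans (IsUltrametricDist.norm_add_le_max a b) (max_le ha hb)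
  zero_mem' := by simp
  neg_mem' := fun {a} ha => by simpa using ha

/-- The maximal ideal `𝔪 = {x ∈ O_L | ‖x‖ < 1}` of the ring of integers. -/
def maxIdeal (L : Type*) [NormedField L] [IsUltrametricDist L] : Ideal (unitBall L) where
  carrier := {x : unitBall L | ‖(x : L)‖ < 1}
  add_mem' := fun {a b} ha hb =>
    lt_of_le_of_lt (IsUltrametricDist.norm_add_le_max (a : L) (b : L)) (max_lt ha hb)
  zero_mem' := by simp
  smul_mem' := fun c x hx => by
    simp only [Set.mem_setOf_eq, smul_eq_mul] at *
    calc ‖(c : L) * (x : L)‖ = ‖(c : L)‖ * ‖(x : L)‖ := norm_mul _ _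
    _ ≤ 1 * ‖(x : L)‖ := mul_le_mul_of_nonneg_right c.2 (norm_nonneg _)
    _ < 1 := by simpa using hx

/-- `V(n) ⊆ O_L^×`: the full unit group for `n = 0`, and the congruence subgroup
`1 + 𝔪^n` for `n ≥ 1`. -/
def unitNbhd (L : Type*) [NormedField L] [IsUltrametricDist L] (n : ℕ) :
    Set (unitBall L)ˣ :=
  if n = 0 then Set.univ else {u : (unitBall L)ˣ | ((u : unitBall L) - 1) ∈ maxIdeal L ^ n}

/-! A power of `𝔪` is generated by `p`, so `𝔪` is invertible, hence principal since the ring of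
integers is local; the congruence subgroups `1 + 𝔪 ^ n` are therefore closed balls around `1` of
radius `q ^ n`, where `‖p‖ = q ^ e`. On a ball of radius `s` around `1` with
`s ^ (p - 1) < ‖p‖`, the map `x ↦ x ^ p` differs from the linear map `x ↦ p x` by a term with
Lipschitz constant smaller than `‖p‖`, so by the non-archimedean inverse function theorem its
image is the ball of radius `‖p‖ s` around `1`. Iterating,
`(1 + 𝔪 ^ c) ^ (p ^ m) = 1 + 𝔪 ^ (c + e m)` for `c > e / (p - 1)`, whence
`H ^ (p ^ m) = φ (∏ᵢ V_i(c_i + e_i m))`, and the growth hypothesis applies to its translates. -/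

section InverseFunction

open Metric
open scoped NNReal

variable {K : Type*} [NormedField K] [IsUltrametricDist K] {f : K → K} {a c : K} {s : ℝ} {k : ℝ≥0}

lemma mapsTo_closedBall_of_norm_sub_sub_mul_le (hk : k ≤ 1)
    (hf : ∀ x ∈ closedBall a s, ∀ y ∈ closedBall a s,
      ‖f x - f y - c * (x - y)‖ ≤ k * (‖c‖ * ‖x - y‖)) :
    Set.MapsTo f (closedBall a s) (closedBall (f a) (‖c‖ * s)) := by
  intro x hx
  have hxs : ‖x - a‖ ≤ s := by rwa [← mem_closedBall_iff_norm]
  have hlin : ‖c‖ * ‖x - a‖ ≤ ‖c‖ * s := by gcongr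
  have herr : ‖f x - f a - c * (x - a)‖ ≤ ‖c‖ * s :=
    (hf x hx a (mem_closedBall_self (dist_nonneg.trans hx))).trans <|
      (mul_le_of_le_one_left (by positivity) (NNReal.coe_le_one.2 hk)).trans hlin
  rw [mem_closedBall_iff_norm, ← sub_add_cancel (f x - f a) (c * (x - a))]
  exact (IsUltrametricDist.norm_add_le_max _ _).trans (max_le herr (by rwa [norm_mul]))

lemma surjOn_closedBall_of_norm_sub_sub_mul_le [CompleteSpace K] (hc : c ≠ 0) (hs : 0 ≤ s)
    (hk : k < 1) (hf : ∀ x ∈ closedBall a s, ∀ y ∈ closedBall a s,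
      ‖f x - f y - c * (x - y)‖ ≤ k * (‖c‖ * ‖x - y‖)) :
    Set.SurjOn f (closedBall a s) (closedBall (f a) (‖c‖ * s)) := by
  intro z hz
  have hc_pos : 0 < ‖c‖ := norm_pos_iff.2 hc
  -- The Newton iteration with the derivative frozen at `c`.
  let T : K → K := fun x ↦ x + c⁻¹ * (z - f x)
  have hmaps : Set.MapsTo T (closedBall a s) (closedBall a s) := by
    intro x hx
    have hfx := mapsTo_closedBall_of_norm_sub_sub_mul_le hk.le hf hx
    have hzfx : ‖z - f x‖ ≤ ‖c‖ * s := by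
      rw [← dist_eq_norm]
      exact (dist_triangle_max z (f a) (f x)).trans (max_le hz (by rwa [dist_comm]))
    have hcorr : ‖c⁻¹ * (z - f x)‖ ≤ s := by
      rwa [norm_mul, norm_inv, inv_mul_le_iff₀ hc_pos]
    rw [mem_closedBall_iff_norm] at hx ⊢
    rw [show T x - a = (x - a) + c⁻¹ * (z - f x) by simp only [T]; ring]
    exact (IsUltrametricDist.norm_add_le_max _ _).trans (max_le hx hcorr)
  have hcontr : ContractingWith k (hmaps.restrict T _ _) := by
    refine ⟨hk, LipschitzWith.of_dist_le_mul fun x y ↦ ?_⟩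
    have hT : T x - T y = -(c⁻¹ * (f x - f y - c * (x - y))) := by
      simp only [T]
      field_simp
      ring
    rw [Subtype.dist_eq, Subtype.dist_eq, dist_eq_norm, dist_eq_norm, Set.MapsTo.val_restrict_apply,
      Set.MapsTo.val_restrict_apply, hT, norm_neg, norm_mul, norm_inv, inv_mul_le_iff₀ hc_pos]
    exact (hf x x.2 y y.2).trans_eq (by ring)
  obtain ⟨x, hx, hfix, -⟩ := hcontr.exists_fixedPoint' isClosed_closedBall.isComplete hmaps
    (mem_closedBall_self hs) (edist_ne_top _ _)
  have hzero : c⁻¹ * (z - f x) = 0 := by simpa only [T, Function.IsFixedPt, add_eq_left] using hfix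
  exact ⟨x, hx, (sub_eq_zero.1 ((mul_eq_zero.1 hzero).resolve_left (inv_ne_zero hc))).symm⟩

/-- In contrast to the archimedean inverse function theorem, no factor `1 - k` is lost in the
radius of the image. -/
theorem image_closedBall_of_norm_sub_sub_mul_le [CompleteSpace K] (hc : c ≠ 0) (hs : 0 ≤ s)
    (hk : k < 1) (hf : ∀ x ∈ closedBall a s, ∀ y ∈ closedBall a s,
      ‖f x - f y - c * (x - y)‖ ≤ k * (‖c‖ * ‖x - y‖)) :
    f '' closedBall a s = closedBall (f a) (‖c‖ * s) :=
  (mapsTo_closedBall_of_norm_sub_sub_mul_le hk.le hf).image_subset.antisymm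
    (surjOn_closedBall_of_norm_sub_sub_mul_le hc hs hk hf)

end InverseFunction

lemma pow_sub_pow_sub_mul_sub_eq_sum {R : Type*} [CommRing R] (x y : R) (n : ℕ) :
    x ^ n - y ^ n - n * (x - y) =
      ∑ k ∈ Finset.Ico 2 (n + 1), n.choose k * ((x - 1) ^ k - (y - 1) ^ k) := by
  obtain _ | n := n
  · simp
  have hexp (z : R) : z ^ (n + 1) =
      1 + (n + 1 : ℕ) * (z - 1) + ∑ k ∈ Finset.Ico 2 (n + 2), (n + 1).choose k * (z - 1) ^ k := by
    calc z ^ (n + 1) = ((z - 1) + 1) ^ (n + 1) := by rw [sub_add_cancel]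
      _ = ∑ k ∈ Finset.Ico 0 (n + 2), (n + 1).choose k * (z - 1) ^ k := by
        simp only [add_pow, one_pow, mul_one, Finset.range_eq_Ico, mul_comm (Nat.cast _)]
      _ = _ := by
        rw [Finset.sum_eq_sum_Ico_succ_bot (by omega), Finset.sum_eq_sum_Ico_succ_bot (by omega)]
        simp only [Nat.choose_zero_right, Nat.choose_one_right, pow_zero, zero_add, pow_one,
          Nat.cast_one, mul_one, add_assoc, Nat.reduceAdd]
  simp only [hexp x, hexp y, mul_sub, Finset.sum_sub_distrib]
  ring

section UltrametricRing

variable {R : Type*} [SeminormedCommRing R] [NormOneClass R] [IsUltrametricDist R]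

lemma norm_pow_sub_pow_le {x y : R} {s : ℝ} (hx : ‖x‖ ≤ s) (hy : ‖y‖ ≤ s) (n : ℕ) :
    ‖x ^ n - y ^ n‖ ≤ s ^ (n - 1) * ‖x - y‖ := by
  have hs : 0 ≤ s := (norm_nonneg x).trans hx
  rw [← geom_sum₂_mul]
  refine (norm_mul_le _ _).trans ?_
  gcongr
  refine IsUltrametricDist.norm_sum_le_of_forall_le_of_nonneg (by positivity) fun i hi ↦ ?_
  calc ‖x ^ i * y ^ (n - 1 - i)‖ ≤ ‖x‖ ^ i * ‖y‖ ^ (n - 1 - i) :=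
        (norm_mul_le _ _).trans (by gcongr <;> exact norm_pow_le _ _)
    _ ≤ s ^ i * s ^ (n - 1 - i) := by gcongr
    _ = s ^ (n - 1) := by
        rw [← pow_add, Nat.add_sub_of_le (Nat.le_sub_one_of_lt (Finset.mem_range.1 hi))]

lemma norm_natCast_le_norm_natCast_of_dvd {m n : ℕ} (h : m ∣ n) : ‖(n : R)‖ ≤ ‖(m : R)‖ := by
  obtain ⟨t, rfl⟩ := h
  rw [Nat.cast_mul]
  exact (norm_mul_le _ _).trans
    (mul_le_of_le_one_right (norm_nonneg _) (IsUltrametricDist.norm_natCast_le_one R t))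

lemma norm_pow_prime_sub_pow_prime_sub_le {p : ℕ} (hp : p.Prime) {x y : R} {s : ℝ} (hs : s ≤ 1)
    (hx : ‖x - 1‖ ≤ s) (hy : ‖y - 1‖ ≤ s) :
    ‖x ^ p - y ^ p - p * (x - y)‖ ≤ max (‖(p : R)‖ * s) (s ^ (p - 1)) * ‖x - y‖ := by
  have hs0 : 0 ≤ s := (norm_nonneg _).trans hx
  rw [pow_sub_pow_sub_mul_sub_eq_sum]
  refine IsUltrametricDist.norm_sum_le_of_forall_le_of_nonneg (by positivity) fun k hk ↦ ?_
  obtain ⟨hk2, hkp⟩ := Finset.mem_Ico.1 hk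
  have hcoeff : ‖(p.choose k : R)‖ * s ^ (k - 1) ≤ max (‖(p : R)‖ * s) (s ^ (p - 1)) := by
    obtain hkp | rfl := (Nat.le_of_lt_succ hkp).lt_or_eq
    · refine le_max_of_le_left (mul_le_mul ?_ ?_ (by positivity) (norm_nonneg _))
      · exact norm_natCast_le_norm_natCast_of_dvd (hp.dvd_choose_self (by omega) hkp)
      · exact pow_le_of_le_one hs0 hs (by omega)
    · exact le_max_of_le_right (by simp)
  calc ‖p.choose k * ((x - 1) ^ k - (y - 1) ^ k)‖
      ≤ ‖(p.choose k : R)‖ * (s ^ (k - 1) * ‖(x - 1) - (y - 1)‖) :=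
        (norm_mul_le _ _).trans (by gcongr; exact norm_pow_sub_pow_le hx hy k)
    _ = ‖(p.choose k : R)‖ * s ^ (k - 1) * ‖x - y‖ := by rw [sub_sub_sub_cancel_right, mul_assoc]
    _ ≤ _ := by gcongr

end UltrametricRing

section PowPrime

open Metric

variable {K : Type*} [NormedField K] [IsUltrametricDist K] [CompleteSpace K]
  {p : ℕ} {s : ℝ}

lemma image_pow_prime_closedBall_one (hp : p.Prime) (hs0 : 0 ≤ s)
    (hs : s ^ (p - 1) < ‖(p : K)‖) :
    (fun x : K ↦ x ^ p) '' closedBall 1 s = closedBall 1 (‖(p : K)‖ * s) := by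
  have hp_pos : 0 < ‖(p : K)‖ := (pow_nonneg hs0 _).trans_lt hs
  have hs1 : s < 1 := (pow_lt_one_iff_of_nonneg hs0 (Nat.sub_ne_zero_of_lt hp.one_lt)).1
    (hs.trans_le (IsUltrametricDist.norm_natCast_le_one K p))
  let k : NNReal := ⟨max s (s ^ (p - 1) / ‖(p : K)‖), le_max_of_le_left hs0⟩
  have hk : k < 1 := max_lt hs1 ((div_lt_one hp_pos).2 hs)
  have hkp : k * ‖(p : K)‖ = max (‖(p : K)‖ * s) (s ^ (p - 1)) := by
    rw [show (k : ℝ) = max s (s ^ (p - 1) / ‖(p : K)‖) from rfl,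
      max_mul_of_nonneg _ _ hp_pos.le, div_mul_cancel₀ _ hp_pos.ne', mul_comm]
  have himage := image_closedBall_of_norm_sub_sub_mul_le (f := fun x : K ↦ x ^ p) (a := 1)
    (norm_pos_iff.1 hp_pos) hs0 hk fun x hx y hy ↦ by
      rw [← mul_assoc, hkp]
      exact norm_pow_prime_sub_pow_prime_sub_le hp hs1.le (mem_closedBall_iff_norm.1 hx)
        (mem_closedBall_iff_norm.1 hy)
  simpa only [one_pow] using himage

lemma image_pow_prime_pow_closedBall_one (hp : p.Prime) (hs0 : 0 ≤ s)
    (hs : s ^ (p - 1) < ‖(p : K)‖) (m : ℕ) :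
    (fun x : K ↦ x ^ p ^ m) '' closedBall 1 s = closedBall 1 (‖(p : K)‖ ^ m * s) := by
  induction m with
  | zero => simp
  | succ m ih =>
    have hle : ‖(p : K)‖ ^ m * s ≤ s := mul_le_of_le_one_left hs0
      (pow_le_one₀ (norm_nonneg _) (IsUltrametricDist.norm_natCast_le_one K p))
    calc (fun x : K ↦ x ^ p ^ (m + 1)) '' closedBall 1 s
        = (fun x : K ↦ x ^ p) '' ((fun x : K ↦ x ^ p ^ m) '' closedBall 1 s) := by
          simp only [Set.image_image, pow_succ, pow_mul]
      _ = closedBall 1 (‖(p : K)‖ * (‖(p : K)‖ ^ m * s)) := by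
          rw [ih, image_pow_prime_closedBall_one hp (by positivity)
            ((pow_le_pow_left₀ (by positivity) hle _).trans_lt hs)]
      _ = closedBall 1 (‖(p : K)‖ ^ (m + 1) * s) := by rw [pow_succ', mul_assoc]

end PowPrime

open scoped nonZeroDivisors in
lemma isPrincipal_of_pow_eq_span_singleton {R : Type*} [CommRing R] [IsLocalRing R] {I : Ideal R}
    {n : ℕ} {a : R} (hn : n ≠ 0) (ha : a ∈ R⁰) (hI : I ^ n = Ideal.span {a}) :
    I.IsPrincipal := by
  have hfin : {J : Ideal R | J.IsMaximal}.Finite := Set.Subsingleton.finite fun J hJ J' hJ' ↦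
    (IsLocalRing.eq_maximalIdeal hJ).trans (IsLocalRing.eq_maximalIdeal hJ').symm
  have hunit : IsUnit (I : FractionalIdeal R⁰ (FractionRing R)) := by
    refine (isUnit_pow_iff hn).1 ?_
    obtain ⟨b, hb⟩ := (IsLocalization.map_units (FractionRing R) (⟨a, ha⟩ : R⁰)).exists_right_inv
    rw [← FractionalIdeal.coeIdeal_pow, hI, FractionalIdeal.coeIdeal_span_singleton]
    refine IsUnit.of_mul_eq_one (FractionalIdeal.spanSingleton R⁰ b) ?_
    rw [FractionalIdeal.spanSingleton_mul_spanSingleton, hb, FractionalIdeal.spanSingleton_one]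
  exact Ideal.IsPrincipal.of_finite_maximals_of_isUnit hfin hunit

section UnitBall

variable {L : Type*} [NormedField L] [IsUltrametricDist L]

lemma mem_unitBall {x : L} : x ∈ unitBall L ↔ ‖x‖ ≤ 1 := Iff.rfl

lemma unitBall_dvd_iff {a b : unitBall L} : a ∣ b ↔ ‖(b : L)‖ ≤ ‖(a : L)‖ := by
  constructor
  · rintro ⟨c, rfl⟩
    simpa using mul_le_of_le_one_right (norm_nonneg (a : L)) c.2
  · intro h
    have hba : (b : L) / a ∈ unitBall L := by
      rw [mem_unitBall, norm_div]
      exact div_le_one_of_le₀ h (norm_nonneg (a : L))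
    have hb_of_ha : (a : L) = 0 → (b : L) = 0 := fun ha ↦ by simpa [ha] using h
    exact ⟨⟨b / a, hba⟩, Subtype.ext (mul_div_cancel_of_imp' hb_of_ha).symm⟩

instance valuationRing_unitBall : ValuationRing (unitBall L) :=
  ValuationRing.iff_dvd_total.2 ⟨fun _ _ ↦ by simpa only [unitBall_dvd_iff] using le_total _ _⟩

lemma exists_mem_maxIdeal_pow_iff_norm_le_pow {a : unitBall L} (ha0 : 0 < ‖(a : L)‖)
    (ha1 : ‖(a : L)‖ < 1) {e : ℕ} (he : Ideal.span {a} = maxIdeal L ^ e) :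
    ∃ q ∈ Set.Ioo (0 : ℝ) 1, ‖(a : L)‖ = q ^ e ∧
      ∀ (n : ℕ) (x : unitBall L), x ∈ maxIdeal L ^ n ↔ ‖(x : L)‖ ≤ q ^ n := by
  have ha : a ≠ 0 := by rintro rfl; simp at ha0
  have he0 : e ≠ 0 := by
    rintro rfl
    have h1 : (1 : unitBall L) ∈ Ideal.span {a} := by simp [he]
    simpa using (unitBall_dvd_iff.1 (Ideal.mem_span_singleton.1 h1)).trans_lt ha1
  obtain ⟨ϖ, hϖ⟩ := isPrincipal_of_pow_eq_span_singleton he0 (mem_nonZeroDivisors_of_ne_zero ha)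
    he.symm
  have hmem (n : ℕ) (x : unitBall L) : x ∈ maxIdeal L ^ n ↔ ‖(x : L)‖ ≤ ‖(ϖ : L)‖ ^ n := by
    rw [hϖ, Ideal.submodule_span_eq, Ideal.span_singleton_pow, Ideal.mem_span_singleton,
      unitBall_dvd_iff, SubmonoidClass.coe_pow, norm_pow]
  have hnorm : ‖(a : L)‖ = ‖(ϖ : L)‖ ^ e := by
    refine le_antisymm ((hmem e a).1 (he ▸ Ideal.mem_span_singleton_self a)) ?_
    have hϖe : ϖ ^ e ∈ Ideal.span {a} := he ▸ (hmem e _).2 (by simp)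
    simpa using unitBall_dvd_iff.1 (Ideal.mem_span_singleton.1 hϖe)
  have hϖ1 : ‖(ϖ : L)‖ < 1 := (hϖ ▸ Submodule.mem_span_singleton_self ϖ : ϖ ∈ maxIdeal L)
  have hϖ0 : ‖(ϖ : L)‖ ≠ 0 := fun h ↦ ha0.ne' (by rw [hnorm, h, zero_pow he0])
  exact ⟨‖(ϖ : L)‖, ⟨(norm_nonneg _).lt_of_ne' hϖ0, hϖ1⟩, hnorm, hmem⟩

lemma mem_unitNbhd {n : ℕ} {u : (unitBall L)ˣ} :
    u ∈ unitNbhd L n ↔ (u : unitBall L) - 1 ∈ maxIdeal L ^ n := by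
  rw [unitNbhd]
  split_ifs with hn <;> simp [hn]

lemma exists_unit_pow_eq_of_pow_eq_coe {x : L} {u : (unitBall L)ˣ} {n : ℕ} (hn : n ≠ 0)
    (h : x ^ n = ((u : unitBall L) : L)) :
    ∃ v : (unitBall L)ˣ, ((v : unitBall L) : L) = x ∧ v ^ n = u := by
  have hx : x ∈ unitBall L := by
    refine (pow_le_one_iff_of_nonneg (norm_nonneg x) hn).1 ?_
    rw [← norm_pow, h]
    exact (u : unitBall L).2
  have hxu : (⟨x, hx⟩ : unitBall L) ^ n = u := Subtype.ext h
  obtain ⟨v, hv⟩ : IsUnit (⟨x, hx⟩ : unitBall L) := (isUnit_pow_iff hn).1 (hxu ▸ u.isUnit)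
  exact ⟨v, by rw [hv], Units.ext (by rw [Units.val_pow_eq_pow_val, hv, hxu])⟩

theorem image_pow_prime_pow_unitNbhd [CompleteSpace L] {p : ℕ} (hp : p.Prime)
    (hpL : ‖(p : L)‖ ∈ Set.Ioo 0 1) {e n : ℕ}
    (he : Ideal.span {(p : unitBall L)} = maxIdeal L ^ e) (hn : e < n * (p - 1)) (m : ℕ) :
    (fun u : (unitBall L)ˣ ↦ u ^ p ^ m) '' unitNbhd L n = unitNbhd L (n + e * m) := by
  obtain ⟨q, ⟨hq0, hq1⟩, hpq, hmem⟩ := exists_mem_maxIdeal_pow_iff_norm_le_pow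
    (a := (p : unitBall L)) (by simpa using hpL.1) (by simpa using hpL.2) he
  have hmem_ball (k : ℕ) (u : (unitBall L)ˣ) :
      u ∈ unitNbhd L k ↔ ((u : unitBall L) : L) ∈ Metric.closedBall 1 (q ^ k) := by
    rw [mem_unitNbhd, hmem, mem_closedBall_iff_norm]
    simp
  replace hpq : ‖(p : L)‖ = q ^ e := by simpa using hpq
  have hradius : (q ^ n) ^ (p - 1) < ‖(p : L)‖ := by
    rw [hpq, ← pow_mul]
    exact pow_lt_pow_right_of_lt_one₀ hq0 hq1 hn
  have himage : (fun x : L ↦ x ^ p ^ m) '' Metric.closedBall 1 (q ^ n) =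
      Metric.closedBall 1 (q ^ (n + e * m)) := by
    rw [image_pow_prime_pow_closedBall_one hp (by positivity) hradius, hpq, ← pow_mul, ← pow_add,
      add_comm]
  ext u
  simp only [Set.mem_image, hmem_ball, ← himage]
  constructor
  · rintro ⟨v, hv, rfl⟩
    exact ⟨_, hv, by simp⟩
  · rintro ⟨x, hx, hxu⟩
    obtain ⟨v, rfl, hvu⟩ := exists_unit_pow_eq_of_pow_eq_coe (pow_ne_zero m hp.ne_zero) hxu
    exact ⟨v, hx, hvu⟩

end UnitBall

lemma exists_forall_mem_and_eq_mul_map_pow_iff {ι G : Type*} {M : ι → Type*} [∀ i, Monoid (M i)]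
    [Monoid G] (φ : (∀ i, M i) →* G) (A : ∀ i, Set (M i)) (N : ℕ) (x y : G) :
    (∃ u : ∀ i, M i, (∀ i, u i ∈ A i) ∧ y = x * φ u ^ N) ↔
      ∃ u : ∀ i, M i, (∀ i, u i ∈ (fun v : M i ↦ v ^ N) '' A i) ∧ y = x * φ u := by
  constructor
  · rintro ⟨u, hu, rfl⟩
    exact ⟨u ^ N, fun i ↦ Set.mem_image_of_mem _ (hu i), by rw [map_pow]⟩
  · rintro ⟨u, hu, rfl⟩
    choose v hv hvu using hu
    exact ⟨v, hv, by rw [← map_pow, ← show v ^ N = u from funext hvu]⟩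

lemma norm_natCast_prime_mem_Ioo {p : ℕ} [Fact p.Prime] {L : Type*} [NormedRing L]
    [Algebra ℚ_[p] L] (hL : ∀ x : ℚ_[p], ‖algebraMap ℚ_[p] L x‖ = ‖x‖) :
    ‖(p : L)‖ ∈ Set.Ioo 0 1 := by
  have hp : 1 < (p : ℝ) := mod_cast (Fact.out : p.Prime).one_lt
  have hnorm : ‖(p : L)‖ = (p : ℝ)⁻¹ := by simpa using hL p
  rw [hnorm]
  exact ⟨inv_pos.2 (zero_lt_one.trans hp), inv_lt_one_of_one_lt₀ hp⟩

lemma lt_mul_sub_one_of_div_lt {p e c : ℕ} (hp : 1 < p) (h : (e : ℝ) / ((p : ℝ) - 1) < c) :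
    e < c * (p - 1) := by
  have hp_pos : (0 : ℝ) < (p : ℝ) - 1 := sub_pos.2 (mod_cast hp)
  rw [div_lt_iff₀ hp_pos, ← Nat.cast_pred (zero_lt_one.trans hp)] at h
  exact_mod_cast h

theorem stmt9_general {p : ℕ} (hp : p.Prime) {ι : Type*} [Fintype ι] {L : ι → Type*}
    [∀ i, NormedField (L i)] [∀ i, CompleteSpace (L i)] [∀ i, IsUltrametricDist (L i)]
    (hpL : ∀ i, ‖(p : L i)‖ ∈ Set.Ioo 0 1)
    {e : ι → ℕ} (he : ∀ i, Ideal.span {(p : unitBall (L i))} = maxIdeal (L i) ^ (e i))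
    {G : Type*} [Monoid G] [TopologicalSpace G] (φ : ((i : ι) → (unitBall (L i))ˣ) →* G)
    {R M : Type*} [Semiring R] [SeminormedAddCommGroup M] [Module R M]
    (μ : LocallyConstant G R →ₗ[R] M) {r : ι → ℝ} {C : ℝ}
    (hgrowth : ∀ (x : G) (n : ι → ℕ) (f : LocallyConstant G R),
      ⇑f = Set.indicator
          {y : G | ∃ u : (i : ι) → (unitBall (L i))ˣ,
            (∀ i, u i ∈ unitNbhd (L i) (n i)) ∧ y = x * φ u}
          (fun _ => (1 : R)) →
      ‖μ f‖ ≤ (p : ℝ) ^ ((∑ i, r i * (n i : ℝ)) - C))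
    {c : ι → ℕ} (hc : ∀ i, (e i : ℝ) / ((p : ℝ) - 1) < (c i : ℝ)) :
    ∃ C' : ℝ, ∀ (x : G) (m : ℕ) (f : LocallyConstant G R),
      ⇑f = Set.indicator
          {y : G | ∃ u : (i : ι) → (unitBall (L i))ˣ,
            (∀ i, ((u i : unitBall (L i)) - 1) ∈ maxIdeal (L i) ^ (c i)) ∧
            y = x * (φ u) ^ (p ^ m)}
          (fun _ => (1 : R)) →
      ‖μ f‖ ≤ (p : ℝ) ^ ((∑ i, (e i : ℝ) * r i) * (m : ℝ) - C') := by
  refine ⟨C - ∑ i, r i * c i, fun x m f hf ↦ ?_⟩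
  have himage (i : ι) : (fun u : (unitBall (L i))ˣ ↦ u ^ p ^ m) '' unitNbhd (L i) (c i) =
      unitNbhd (L i) (c i + e i * m) :=
    image_pow_prime_pow_unitNbhd hp (hpL i) (he i) (lt_mul_sub_one_of_div_lt hp.one_lt (hc i)) m
  simp only [← mem_unitNbhd, exists_forall_mem_and_eq_mul_map_pow_iff, himage] at hf
  have hexponent : ∑ i, r i * ((c i + e i * m : ℕ) : ℝ) - C =
      (∑ i, (e i : ℝ) * r i) * m - (C - ∑ i, r i * c i) := by
    have hterm (i : ι) : r i * ((c i + e i * m : ℕ) : ℝ) = r i * c i + e i * r i * m := by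
      push_cast
      ring
    rw [Finset.sum_congr rfl fun i _ ↦ hterm i, Finset.sum_add_distrib, ← Finset.sum_mul]
    ring
  exact (hgrowth x _ f hf).trans_eq (congrArg _ hexponent)

/-- Let `L_1, …, L_g` be finite extensions of `ℚ_p` with ramification
indices `e_i`, `G` a profinite abelian group and `φ : ∏_i O_i^× → G` a continuous
homomorphism with open image.  If a locally constant distribution `μ` on `G` satisfies
`v_p(μ(1_{x·φ(∏ V_i(n_i))})) ≥ C - Σ_i r_i n_i`, then for any `c_i > e_i/(p-1)` and
`H = φ(∏_i (1+𝔪_i^{c_i}))`, there is `C'` with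
`v_p(μ(1_{x·H^{p^m}})) ≥ C' - (Σ_i e_i r_i)·m` for all `x ∈ G`, `m ≥ 0`. -/
theorem stmt9 (p : ℕ) [Fact p.Prime]
    (E : Type*) [NormedField E] [CompleteSpace E] [IsUltrametricDist E]
    [Algebra ℚ_[p] E] [FiniteDimensional ℚ_[p] E]
    (hE : ∀ x : ℚ_[p], ‖algebraMap ℚ_[p] E x‖ = ‖x‖)
    (g : ℕ) (L : Fin g → Type*) [∀ i, NormedField (L i)] [∀ i, CompleteSpace (L i)]
    [∀ i, IsUltrametricDist (L i)] [∀ i, Algebra ℚ_[p] (L i)]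
    [∀ i, FiniteDimensional ℚ_[p] (L i)]
    (hL : ∀ i, ∀ x : ℚ_[p], ‖algebraMap ℚ_[p] (L i) x‖ = ‖x‖)
    (e : Fin g → ℕ) (he : ∀ i, Ideal.span {(p : unitBall (L i))} = maxIdeal (L i) ^ (e i))
    (G : Type*) [CommGroup G] [TopologicalSpace G] [IsTopologicalGroup G]
    [CompactSpace G] [T2Space G] [TotallyDisconnectedSpace G]
    (φ : ((i : Fin g) → (unitBall (L i))ˣ) →* G)
    (hφcont : Continuous φ) (hφopen : IsOpen (Set.range φ))
    (r : Fin g → ℝ) (hr : ∀ i, 0 ≤ r i)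
    (μ : LocallyConstant G E →ₗ[E] E)
    (C : ℝ)
    (hgrowth : ∀ (x : G) (n : Fin g → ℕ) (f : LocallyConstant G E),
      ⇑f = Set.indicator
          {y : G | ∃ u : (i : Fin g) → (unitBall (L i))ˣ,
            (∀ i, u i ∈ unitNbhd (L i) (n i)) ∧ y = x * φ u}
          (fun _ => (1 : E)) →
      ‖μ f‖ ≤ (p : ℝ) ^ ((∑ i : Fin g, r i * (n i : ℝ)) - C))
    (c : Fin g → ℕ) (hc : ∀ i, (e i : ℝ) / ((p : ℝ) - 1) < (c i : ℝ)) :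
    ∃ C' : ℝ, ∀ (x : G) (m : ℕ) (f : LocallyConstant G E),
      ⇑f = Set.indicator
          {y : G | ∃ u : (i : Fin g) → (unitBall (L i))ˣ,
            (∀ i, ((u i : unitBall (L i)) - 1) ∈ maxIdeal (L i) ^ (c i)) ∧
            y = x * (φ u) ^ (p ^ m)}
          (fun _ => (1 : E)) →
      ‖μ f‖ ≤ (p : ℝ) ^ ((∑ i : Fin g, (e i : ℝ) * r i) * (m : ℝ) - C') :=
  stmt9_general Fact.out (fun i ↦ norm_natCast_prime_mem_Ioo (hL i)) he φ μ hgrowth hc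
end

section
/- Let p be a prime, L a finite extension of ℚ_p of degree d, O_L its ring of integers, and 𝔞 a nonzero ideal of O_L (a free ℤ_p-module of rank d). Let w ∈ ℤ be such that the image of 𝔞 under the trace map Tr_{L/ℚ_p} : L → ℚ_p is equal to p^w ℤ_p. Then there exists a ℤ_p-basis b_1, …, b_d of 𝔞 such that Tr_{L/ℚ_p}(b_j) = p^w for every j = 1, …, d. -/
open Filter Topology

/-!
Only the structure of `𝔞` as a lattice matters: it spans `L` because every element of `L` can be
scaled into the unit ball, and it is finitely generated because a bounded submodule is contained in
the span of a large multiple of a `ℚ_p`-basis of `L`. Dividing by `p ^ w`, the trace becomes a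
surjective functional `f : 𝔞 → ℤ_p`. An element `x` with `f x = 1` splits off the kernel of `f`, so
it belongs to a basis `b` of `𝔞`, and replacing each `b j` by `b j + (1 - f (b j)) • x` gives a
basis on which `f` is constantly `1`.
-/

open Module Bornology

section LinearAlgebra

variable {R M : Type*} [CommRing R] [AddCommGroup M] [Module R M]

theorem exists_basis_forall_apply_eq_one_of_exists {ι : Type*} (b : Basis ι R M) (f : Dual R M)
    (hb : ∃ i, f (b i) = 1) : ∃ b' : Basis ι R M, ∀ j, f (b' j) = 1 := by
  obtain ⟨i, hi⟩ := hb
  let g : Dual R M := b.constr R fun j => 1 - f (b j)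
  have hg (j) : g (b j) = 1 - f (b j) := b.constr_basis R _ j
  have hgi : g (b i) = 0 := by rw [hg, hi, sub_self]
  refine ⟨b.map (LinearEquiv.transvection hgi), fun j => ?_⟩
  simp [LinearMap.transvection.apply, hg, hi]

variable [IsDomain R] [IsPrincipalIdealRing R] [Module.Free R M] [Module.Finite R M]

theorem exists_basis_apply_eq_of_dual_apply_eq_one (f : Dual R M) {x : M} (hx : f x = 1) :
    ∃ (b : Basis (Fin (finrank R M)) R M) (i : Fin (finrank R M)), b i = x := by
  let b := Basis.mkFinCons x (finBasis R (LinearMap.ker f))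
    (fun c y hy h => by simpa [hx, LinearMap.mem_ker.mp hy] using congrArg f h)
    (fun z => ⟨-f z, by simp [hx]⟩)
  have hb : b 0 = x := by simp [b]
  have hrank : finrank R (LinearMap.ker f) + 1 = finrank R M := by
    rw [finrank_eq_card_basis b, Fintype.card_fin]
  exact ⟨b.reindex (finCongr hrank), finCongr hrank 0, by simpa using hb⟩

theorem exists_basis_forall_apply_eq_of_range_eq_span_singleton {P : Type*} [AddCommGroup P]
    [Module R P] [IsTorsionFree R P] (f : M →ₗ[R] P) {c : P} (hc : c ≠ 0)
    (hf : LinearMap.range f = R ∙ c) :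
    ∃ b : Basis (Fin (finrank R M)) R M, ∀ j, f (b j) = c := by
  let g : Dual R M := (LinearEquiv.coord R P c hc).toLinearMap ∘ₗ
    f.codRestrict (R ∙ c) fun y => hf ▸ LinearMap.mem_range_self f y
  have hfg (y) : g y • c = f y := LinearEquiv.coord_apply_smul R P c hc _
  obtain ⟨x, hx⟩ : c ∈ LinearMap.range f := hf ▸ Submodule.mem_span_singleton_self c
  have hgx : g x = 1 := smul_left_injective R hc (by simp [hfg, hx])
  obtain ⟨b, i, hi⟩ := exists_basis_apply_eq_of_dual_apply_eq_one g hgx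
  obtain ⟨b', hb'⟩ := exists_basis_forall_apply_eq_one_of_exists b g ⟨i, by rw [hi, hgx]⟩
  exact ⟨b', fun j => by rw [← hfg, hb', one_smul]⟩

end LinearAlgebra

theorem exists_basis_forall_apply_eq_of_isLattice {R K V P : Type*} [CommRing R] [IsDomain R]
    [IsPrincipalIdealRing R] [Field K] [Algebra R K] [IsFractionRing R K] [AddCommGroup V]
    [Module K V] [Module R V] [IsScalarTower R K V] [AddCommGroup P] [Module R P]
    [IsTorsionFree R P] (N : Submodule R V) [N.IsLattice K] (φ : V →ₗ[R] P) {c : P} (hc : c ≠ 0)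
    (hφ : N.map φ = R ∙ c) :
    ∃ b : Basis (Fin (finrank K V)) R N, ∀ j, φ (b j) = c := by
  have : Module.Free R N := Submodule.IsLattice.free K N
  have hrank : finrank R N = finrank K V :=
    congrArg Cardinal.toNat (Submodule.IsLattice.rank' K N)
  exact hrank ▸ exists_basis_forall_apply_eq_of_range_eq_span_singleton (φ ∘ₗ N.subtype) hc
    (by rw [LinearMap.range_comp, N.range_subtype, hφ])

section NormedField

variable {R K : Type*} [CommRing R] [NontriviallyNormedField K]

theorem span_eq_top_of_forall_norm_le_one_mul_mem {L : Type*} [NormedDivisionRing L]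
    [NormedAlgebra K L] {S : Set L} (hS : ∀ x ∈ S, ∀ y : L, ‖y‖ ≤ 1 → y * x ∈ S)
    (hne : ∃ x ∈ S, x ≠ 0) : Submodule.span K S = ⊤ := by
  obtain ⟨x, hx, hx0⟩ := hne
  refine eq_top_iff.mpr fun y _ => ?_
  obtain ⟨a, ha⟩ := NormedField.exists_lt_norm K ‖y / x‖
  have ha0 : 0 < ‖a‖ := (norm_nonneg _).trans_lt ha
  have hle : ‖a⁻¹ • (y / x)‖ ≤ 1 := by
    rw [norm_smul, norm_inv]
    exact inv_mul_le_one_of_le₀ ha.le ha0.le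
  have hy : a • (a⁻¹ • (y / x) * x) = y := by
    rw [smul_mul_assoc, div_mul_cancel₀ _ hx0, smul_inv_smul₀ (norm_pos_iff.mp ha0)]
  exact hy ▸ Submodule.smul_mem _ a (Submodule.subset_span (hS x hx _ hle))

variable [CompleteSpace K] [Algebra R K]

theorem submodule_fg_of_isBounded [IsNoetherianRing R]
    (hR : ∀ a : K, ‖a‖ ≤ 1 → a ∈ Set.range (algebraMap R K))
    {V : Type*} [NormedAddCommGroup V] [NormedSpace K V] [FiniteDimensional K V] [Module R V]
    [IsScalarTower R K V] {N : Submodule R V} (hN : IsBounded (N : Set V)) : N.FG := by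
  let e := finBasis K V
  obtain ⟨C, hC⟩ := isBounded_iff_forall_norm_le.mp
    (e.equivFunL.toContinuousLinearMap.lipschitz.isBounded_image hN)
  obtain ⟨a, ha⟩ := NormedField.exists_lt_norm K (max C 0)
  have ha0 : 0 < ‖a‖ := (le_max_right _ _).trans_lt ha
  have hcoord (x) (hx : x ∈ N) (i) : a⁻¹ * e.repr x i ∈ Set.range (algebraMap R K) := by
    refine hR _ ?_
    have hle : ‖e.repr x i‖ ≤ ‖a‖ := calc
      ‖e.repr x i‖ ≤ ‖e.equivFunL x‖ := norm_le_pi_norm (e.equivFunL x) i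
      _ ≤ C := hC _ ⟨x, hx, rfl⟩
      _ ≤ ‖a‖ := (le_max_left _ _).trans ha.le
    rw [norm_mul, norm_inv]
    exact inv_mul_le_one_of_le₀ hle ha0.le
  have hspan : N ≤ Submodule.span R (Set.range fun i => a • e i) := fun x hx => by
    rw [← e.sum_repr x]
    refine Submodule.sum_mem _ fun i _ => ?_
    obtain ⟨r, hr⟩ := hcoord x hx i
    have hri : r • a • e i = e.repr x i • e i := by
      rw [← algebraMap_smul K r, hr, smul_smul, mul_right_comm,
        inv_mul_cancel₀ (norm_pos_iff.mp ha0), one_mul]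
    exact hri ▸ Submodule.smul_mem _ r (Submodule.subset_span ⟨i, rfl⟩)
  have := isNoetherian_span_of_finite R (Set.finite_range fun i => a • e i)
  exact Submodule.FG.of_le_of_isNoetherian hspan

theorem stmt10_general [IsDomain R] [IsPrincipalIdealRing R] [IsFractionRing R K]
    (hR : ∀ a : K, ‖a‖ ≤ 1 → a ∈ Set.range (algebraMap R K)) {L : Type*} [NormedDivisionRing L]
    [NormedAlgebra K L] [FiniteDimensional K L] [Module R L] [IsScalarTower R K L]
    (𝔞 : Submodule R L) (hbounded : IsBounded (𝔞 : Set L))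
    (hideal : ∀ x ∈ 𝔞, ∀ y : L, ‖y‖ ≤ 1 → y * x ∈ 𝔞) (hne : 𝔞 ≠ ⊥) (φ : L →ₗ[K] K) {c : K}
    (hc : c ≠ 0) (hφ : φ '' (𝔞 : Set L) = {y : K | ∃ r : R, y = c * algebraMap R K r}) :
    ∃ b : Basis (Fin (finrank K L)) R 𝔞, ∀ j, φ (b j) = c := by
  have : 𝔞.IsLattice K := ⟨submodule_fg_of_isBounded hR hbounded,
    span_eq_top_of_forall_norm_le_one_mul_mem hideal (𝔞.ne_bot_iff.mp hne)⟩
  have himage : 𝔞.map (φ.restrictScalars R) = R ∙ c := by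
    refine SetLike.coe_injective (hφ.trans (Set.ext fun y => ?_))
    simp [Submodule.mem_span_singleton, Algebra.smul_def, eq_comm, mul_comm]
  exact exists_basis_forall_apply_eq_of_isLattice 𝔞 (φ.restrictScalars R) hc himage

end NormedField

/-- Let `L` be a finite extension of `ℚ_p` of degree `d` and let `𝔞` be a
nonzero ideal of the ring of integers `O_L` (viewed as a `ℤ_p`-submodule of `L`, free of
rank `d`).  If the image of `𝔞` under the trace `Tr_{L/ℚ_p}` equals `p^w ℤ_p`, then `𝔞` has a
`ℤ_p`-basis `b_1, …, b_d` with `Tr_{L/ℚ_p}(b_j) = p^w` for every `j`. -/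
theorem stmt10 (p : ℕ) [Fact p.Prime] (L : Type*) [NormedField L] [CompleteSpace L]
    [IsUltrametricDist L] [Algebra ℚ_[p] L] [FiniteDimensional ℚ_[p] L]
    [Algebra ℤ_[p] L] [IsScalarTower ℤ_[p] ℚ_[p] L]
    (hL : ∀ x : ℚ_[p], ‖algebraMap ℚ_[p] L x‖ = ‖x‖)
    (d : ℕ) (hd : Module.finrank ℚ_[p] L = d)
    (𝔞 : Submodule ℤ_[p] L)
    -- `𝔞` is contained in the ring of integers `O_L = {x | ‖x‖ ≤ 1}` …
    (h𝔞int : ∀ x ∈ 𝔞, ‖x‖ ≤ 1)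
    -- … and is an ideal of `O_L`
    (h𝔞ideal : ∀ x ∈ 𝔞, ∀ y : L, ‖y‖ ≤ 1 → y * x ∈ 𝔞)
    (h𝔞ne : 𝔞 ≠ ⊥)
    (w : ℤ)
    (htrace : (fun x : L => Algebra.trace ℚ_[p] L x) '' (𝔞 : Set L) =
      {y : ℚ_[p] | ∃ z : ℤ_[p], y = (p : ℚ_[p]) ^ w * (z : ℚ_[p])}) :
    ∃ b : Module.Basis (Fin d) ℤ_[p] 𝔞,
      ∀ j : Fin d, Algebra.trace ℚ_[p] L ((b j : L)) = (p : ℚ_[p]) ^ w := by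
  let _ : NormedAlgebra ℚ_[p] L := ⟨fun a x => by rw [Algebra.smul_def, norm_mul, hL]⟩
  exact hd ▸ stmt10_general (fun a ha => ⟨⟨a, ha⟩, rfl⟩) 𝔞
    (isBounded_iff_forall_norm_le.mpr ⟨1, h𝔞int⟩) h𝔞ideal h𝔞ne _ (zpow_ne_zero w (NeZero.ne _))
    htrace
end
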